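/- For every real ε > 0 there exists k₀ = k₀(ε) such that for every integer k ≥ k₀ and every real r with 0 < r < 2^(k-1)·ln 2 − (ln 2)/2 − 1/2 − ε, the function g_r satisfies: g_r(α) < g_r(1/2) for every α ∈ [0,1] with α ≠ 1/2, and g_r''(1/2) < 0. -/

import Mathlib

/-- The correlation function for NAE `k`-SAT:
`f_N(α) = 1 - 2^(2-k) + 2^(1-k) (α^k + (1-α)^k)`. -/
noncomputable def fN (k : ℕ) (α : ℝ) : ℝ :=
  1 - (2 : ℝ) ^ ((2 : ℤ) - k) + (2 : ℝ) ^ ((1 : ℤ) - k) * (α ^ k + (1 - α) ^ k)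

/-- `g_r(α) = f_N(α)^r / (α^α (1-α)^(1-α))`, with the `0^0 = 1` convention of
`Real.rpow` at the endpoints. -/
noncomputable def gr (k : ℕ) (r : ℝ) (α : ℝ) : ℝ :=
  fN k α ^ r / (α ^ α * (1 - α) ^ (1 - α))


lemma aux_h_le (δ L : ℝ) (h0 : 0 ≤ δ) (h1 : δ ≤ 1 / 2) :
    Real.binEntropy δ ≤ δ * L + Real.exp (-L) := by
  unfold Real.binEntropy
  rw [Real.log_inv, Real.log_inv]
  have hb : (1 - δ) * -Real.log (1 - δ) ≤ δ := by
    have := Real.one_sub_inv_le_log_of_pos (x := 1 - δ) (by linarith)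
    have h2 : (1 - δ) * (1 - (1 - δ)⁻¹) ≤ (1 - δ) * Real.log (1 - δ) :=
      mul_le_mul_of_nonneg_left this (by linarith)
    have h3 : (1 - δ) * (1 - δ)⁻¹ = 1 := mul_inv_cancel₀ (by linarith)
    nlinarith
  rcases h0.eq_or_lt with h | h
  · subst h
    simp
    positivity
  · have hp : 0 < Real.exp (-L) / δ := by positivity
    have := Real.log_le_sub_one_of_pos hp
    rw [Real.log_div (by positivity) (by positivity), Real.log_exp] at this
    have h2 : δ * (-L - Real.log δ) ≤ δ * (Real.exp (-L) / δ - 1) :=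
      mul_le_mul_of_nonneg_left this h0
    have h3 : δ * (Real.exp (-L) / δ) = Real.exp (-L) := by field_simp
    nlinarith

lemma aux_h_le2 (δ : ℝ) (h0 : 0 < δ) (h1 : δ ≤ 1 / 2) :
    Real.binEntropy δ ≤ δ * (-Real.log δ) + δ := by
  have := aux_h_le δ (-Real.log δ) h0.le h1
  rwa [neg_neg, Real.exp_log h0] at this

lemma aux_D (u : ℝ) (h0 : 0 < u) (h1 : u ≤ 1) :
    u ^ 2 / 6 ≤ Real.log 2 - Real.binEntropy ((1 - u) / 2) := by
  unfold Real.binEntropy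
  have e : 1 - (1 - u) / 2 = (1 + u) / 2 := by ring
  rw [e, Real.log_inv, Real.log_inv]
  have hA : (1 - u) * (Real.log 2 + Real.log ((1 - u) / 2)) ≥ -u := by
    rcases h1.eq_or_lt with h | h
    · subst h; simp
    · have hp : 0 < 1 - u := by linarith
      rw [Real.log_div hp.ne' (by norm_num)]
      have := Real.one_sub_inv_le_log_of_pos hp
      have h2 := mul_le_mul_of_nonneg_left this hp.le
      have h3 : (1 - u) * (1 - u)⁻¹ = 1 := mul_inv_cancel₀ hp.ne'
      nlinarith
  have hB : (1 + u) * (Real.log 2 + Real.log ((1 + u) / 2)) ≥ (1 + u) * (2 * u / (u + 2)) := by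
    rw [Real.log_div (by positivity) (by norm_num)]
    have := Real.le_log_one_add_of_nonneg h0.le
    exact mul_le_mul_of_nonneg_left (by linarith) (by linarith)
  have hC : (1 + u) * (2 * u / (u + 2)) - u ≥ u ^ 2 / 3 := by
    have : (1 + u) * (2 * u / (u + 2)) - u = u ^ 2 / (u + 2) := by field_simp; ring
    rw [this]
    gcongr; linarith
  nlinarith

lemma aux_P (u : ℝ) (h0 : 0 ≤ u) (h1 : u ≤ 1) (k : ℕ) :
    (1 + u) ^ k - (1 - u) ^ k ≤ 2 * k * u * (1 + u) ^ k ∧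
    (1 + u) ^ k + (1 - u) ^ k - 2 ≤ k ^ 2 * u ^ 2 * (1 + u) ^ k := by
  induction k with
  | zero => norm_num
  | succ k ih =>
    obtain ⟨i1, i2⟩ := ih
    have hb : (1 - u) ^ k ≤ (1 + u) ^ k := pow_le_pow_left₀ (by linarith) (by linarith) k
    have ha : 0 ≤ (1 + u) ^ k := by positivity
    have hk : (0:ℝ) ≤ k := by positivity
    rw [pow_succ (1 + u), pow_succ (1 - u)]
    push_cast
    set a := (1 + u) ^ k
    set b := (1 - u) ^ k
    have j1 : 0 ≤ k * u * a * u := by positivity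
    have j2 : 0 ≤ u * a * u := by positivity
    have j3 := mul_le_mul_of_nonneg_left hb h0
    have j4 := mul_le_mul_of_nonneg_left i1 h0
    have j5 : 0 ≤ u ^ 2 * a := by positivity
    have j6 : 0 ≤ (k + 1) ^ 2 * u ^ 2 * a * u := by positivity
    constructor <;> nlinarith

lemma aux_selfpow (x : ℝ) (h : 0 ≤ x) : x ^ x = Real.exp (x * Real.log x) := by
  rcases h.eq_or_lt with h | h
  · subst h; simp
  · rw [Real.rpow_def_of_pos h, mul_comm]

lemma aux_fN (k : ℕ) (q : ℝ) (hq : q = (2 : ℝ) ^ ((1 : ℤ) - k)) (α : ℝ) :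
    fN k α = 1 - 2 * q + q * (α ^ k + (1 - α) ^ k) := by
  unfold fN
  have : (2 : ℝ) ^ ((2 : ℤ) - k) = 2 * q := by
    rw [hq, show (2 : ℤ) - k = 1 + (1 - k) by ring, zpow_add₀ (by norm_num)]; norm_num
  rw [this, hq]

lemma aux_gr (k : ℕ) (r α : ℝ) (h0 : 0 ≤ α) (h1 : α ≤ 1) (hf : 0 < fN k α) :
    gr k r α = Real.exp (r * Real.log (fN k α) + Real.binEntropy α) := by
  unfold gr Real.binEntropy
  rw [aux_selfpow α h0, aux_selfpow (1 - α) (by linarith), Real.rpow_def_of_pos hf,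
    ← Real.exp_add, ← Real.exp_sub, Real.log_inv, Real.log_inv]
  congr 1; ring

lemma aux_exp (x : ℝ) (hx0 : 0 ≤ x) (hx1 : x ≤ 1) : Real.exp (-x) ≤ 1 - x + x ^ 2 * (3 / 4) := by
  have c := Real.exp_bound (x := -x) (by rw [abs_neg, abs_of_nonneg hx0]; exact hx1) (n := 3)
    (by norm_num)
  rw [abs_le] at c
  norm_num [Finset.sum_range_succ, Nat.factorial] at c
  rw [abs_of_nonneg hx0] at c
  nlinarith [mul_nonneg (sq_nonneg x) (sub_nonneg.2 hx1)]

lemma aux_log (q : ℝ) (hq0 : 0 < q) (hq1 : q ≤ 1 / 10) :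
    -Real.log (1 - q) ≤ q + q ^ 2 / 2 + 2 * q ^ 3 := by
  have h1q : 0 < 1 - q := by linarith
  have c := Real.abs_log_sub_add_sum_range_le (x := q) (by rw [abs_of_pos hq0]; linarith) 2
  rw [abs_of_pos hq0, abs_le] at c
  norm_num [Finset.sum_range_succ] at c
  have : q ^ 3 / (1 - q) ≤ 2 * q ^ 3 := by
    rw [div_le_iff₀ h1q]; nlinarith [pow_pos hq0 3]
  linarith

set_option maxHeartbeats 2000000 in
lemma aux_nearOne (k : ℕ) (q r ε δ : ℝ) (hε : 0 < ε) (hq0 : 0 < q) (hq1 : q ≤ 1 / 10)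
    (hqe : Real.exp (-((k : ℝ) * Real.log 2)) = q / 2) (hk : 2 ≤ k)
    (E1 : q * (Real.log 2 / 2 + 1 / 2 + ε) ≤ 1 / 20) (E2 : 4 * q ≤ ε)
    (E3 : (Real.log 2 / 2 + 1 / 2 + ε) ^ 2 * (ε / 8 * q) ≤ (ε / 8) ^ 2)
    (E4 : Real.log k - Real.log (ε / 8 * q) / 2 + 1 < 21 / 40 * k)
    (hr : 0 < r) (hrR : r < Real.log 2 / q - (Real.log 2 / 2 + 1 / 2 + ε))
    (h0 : 0 ≤ δ) (h1 : δ ≤ 1 / 200) :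
    r * (Real.log (1 - 2 * q + q * (δ ^ k + (1 - δ) ^ k)) - 2 * Real.log (1 - q))
      + Real.binEntropy δ < Real.log 2 := by
  have L1 := Real.log_two_gt_d9
  have L2 := Real.log_two_lt_d9
  have hkp : (2:ℝ) ≤ k := by exact_mod_cast hk
  set L := Real.log 2 with hL
  set C := L / 2 + 1 / 2 + ε with hC
  set t := 1 - (δ ^ k + (1 - δ) ^ k) with ht
  have hC0 : 0 < C := by positivity
  -- bounds on t
  have hdk : δ ^ k ≤ δ ^ 2 := pow_le_pow_of_le_one h0 (by linarith) hk
  have hek : (1 - δ) ^ k ≤ Real.exp (-(k * δ)) := by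
    have := Real.one_sub_le_exp_neg δ
    calc (1 - δ) ^ k ≤ (Real.exp (-δ)) ^ k := pow_le_pow_left₀ (by linarith) this k
      _ = Real.exp (-(k * δ)) := by rw [← Real.exp_nat_mul]; congr 1; ring
  set x := (k:ℝ) * δ with hx
  have hx0 : 0 ≤ x := by positivity
  have hx2 : 4 * δ ^ 2 ≤ x ^ 2 := by rw [hx, mul_pow]; gcongr; nlinarith
  have hinv : Real.exp (-x) ≤ 1 / (1 + x) := by
    rw [Real.exp_neg, ← one_div]
    gcongr
    linarith [Real.add_one_le_exp x]
  have ht1 : t ≤ 1 := by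
    have : 0 ≤ δ ^ k := by positivity
    have : 0 ≤ (1 - δ) ^ k := pow_nonneg (by linarith) k
    linarith
  have htx : t ≤ x := by
    have : 0 ≤ δ ^ k := by positivity
    have := one_add_mul_le_pow (a := -δ) (by linarith) k
    rw [← sub_eq_add_neg] at this
    linarith
  have ht0 : 0 ≤ t := by
    have a1 : δ ^ k ≤ δ := pow_le_of_le_one h0 (by linarith) (by omega)
    have a2 : (1 - δ) ^ k ≤ 1 - δ := pow_le_of_le_one (by linarith) (by linarith) (by omega)
    linarith
  have htl : x ≤ 1 → x - x ^ 2 ≤ t := by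
    intro hx1
    have := aux_exp x hx0 hx1
    linarith
  -- log bound
  have h1q : 0 < 1 - q := by linarith
  have hqt : q * t / (1 - q) < 1 := by
    rw [div_lt_one h1q]; nlinarith
  have hlog : Real.log (1 - 2 * q + q * (δ ^ k + (1 - δ) ^ k)) - 2 * Real.log (1 - q)
      ≤ -Real.log (1 - q) - q * t / (1 - q) := by
    have e : 1 - 2 * q + q * (δ ^ k + (1 - δ) ^ k) = (1 - q) * (1 - q * t / (1 - q)) := by
      field_simp; rw [ht]; ring
    rw [e, Real.log_mul h1q.ne' (by linarith)]
    have := Real.log_le_sub_one_of_pos (x := 1 - q * t / (1 - q)) (by linarith)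
    linarith
  have hlq : -Real.log (1 - q) ≤ q + q ^ 2 / 2 + 2 * q ^ 3 :=
    aux_log q hq0 hq1
  -- entropy bound
  have key : Real.binEntropy δ < q / 2 + q * ε / 2 + (L - C * q) * t := by
    have hLC : 3 / 5 ≤ L - C * q := by linarith
    by_cases c1 : x ^ 2 ≤ ε / 8 * q
    · have hh := aux_h_le δ (k * L) h0 (by linarith)
      rw [hqe] at hh
      have hCx : C * x ≤ ε / 8 := by
        refine (sq_le_sq₀ (by positivity) (by positivity)).1 ?_
        calc (C * x) ^ 2 = C ^ 2 * x ^ 2 := by ring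
          _ ≤ C ^ 2 * (ε / 8 * q) := by gcongr
          _ ≤ _ := E3
      have hx1 : x ≤ 1 := by
        have : C ≥ ε := by rw [hC]; linarith
        nlinarith
      have := htl hx1
      have i1 : (L - C * q) * (x - x ^ 2) ≤ (L - C * q) * t :=
        mul_le_mul_of_nonneg_left this (by linarith)
      have i2 : C * x * q ≤ ε / 8 * q := by gcongr
      have i3 : L * x ^ 2 ≤ x ^ 2 := by nlinarith [sq_nonneg x]
      have i4 : 0 ≤ C * q * x ^ 2 := by positivity
      have i5 : δ * (k * L) = L * x := by rw [hx]; ring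
      have i6 : 0 < q * ε := by positivity
      have i7 : x ^ 2 ≤ q * ε / 8 := by linarith
      linarith
    · push Not at c1
      have hxp : 0 < x := by
        rcases hx0.eq_or_lt with h | h
        · rw [← h] at c1
          have : 0 < ε / 8 * q := by positivity
          norm_num at c1; linarith
        · exact h
      have hδp : 0 < δ := by
        by_contra h
        have : δ = 0 := by linarith
        rw [hx, this] at hxp; simp at hxp
      have hpos : 0 < q / 2 + q * ε / 2 := by positivity
      have i0 : 3 / 5 * t ≤ (L - C * q) * t := by gcongr
      by_cases c2 : x ≤ 1 / 8
      · have hh := aux_h_le2 δ hδp (by linarith)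
        have hl := Real.log_lt_log (by positivity) c1
        have hlx : Real.log x = Real.log k + Real.log δ := by
          rw [hx, Real.log_mul (by positivity) (by positivity)]
        rw [Real.log_pow, hlx] at hl
        push_cast at hl
        have i1 : δ * (-Real.log δ + 1) ≤ δ * (21 / 40 * k) := by
          apply mul_le_mul_of_nonneg_left _ h0
          linarith
        have i2 := htl (by linarith)
        have i3 : δ * (21 / 40 * k) = 21 / 40 * x := by rw [hx]; ring
        have i4 : x ^ 2 ≤ 1 / 8 * x := by rw [sq]; gcongr
        linarith
      · push Not at c2
        have hh := aux_h_le δ 4 h0 (by linarith)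
        have e4 : Real.exp (-4) ≤ 1 / 50 := by
          rw [Real.exp_neg, ← one_div]
          have : Real.exp 4 = Real.exp 1 ^ 4 := by rw [← Real.exp_nat_mul]; norm_num
          rw [this]
          gcongr
          calc (50:ℝ) ≤ 2.7 ^ 4 := by norm_num
            _ ≤ _ := by gcongr; linarith [Real.exp_one_gt_d9]
        have : 1 / (1 + x) ≤ 8 / 9 := by
          rw [div_le_div_iff₀ (by positivity) (by norm_num)]; linarith
        have : δ ^ 2 ≤ 1 / 200 := by nlinarith
        linarith
  have hDpos : Real.binEntropy δ < L := by
    have := Real.binEntropy_lt_log_two.2 (show δ ≠ 2⁻¹ by intro h; rw [h] at h1; norm_num at h1)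
    exact this
  set X := -Real.log (1 - q) - q * t / (1 - q) with hX
  set R := L / q - C with hR
  have hR0 : 0 < R := by linarith
  have hRq : R * q = L - C * q := by rw [hR]; field_simp
  have hfin : R * X + Real.binEntropy δ < L := by
    have i1 : R * (-Real.log (1 - q)) ≤ R * (q + q ^ 2 / 2 + 2 * q ^ 3) := by gcongr
    have i2 : R * (q + q ^ 2 / 2 + 2 * q ^ 3) = (L - C * q) * (1 + q / 2 + 2 * q ^ 2) := by
      rw [← hRq]; ring
    have i3 : R * (q * t) ≤ R * (q * t / (1 - q)) := by
      gcongr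
      rw [le_div_iff₀ h1q]
      nlinarith [mul_nonneg hq0.le ht0]
    have i4 : R * (q * t) = (L - C * q) * t := by rw [← hRq]; ring
    have i5 : 0 ≤ C * q * (q / 2 + 2 * q ^ 2) := by positivity
    have i6 : 2 * L * q ^ 2 ≤ q * ε / 2 := by
      have j1 : L * (2 * q ^ 2) ≤ 1 * (2 * q ^ 2) := by gcongr; linarith
      have j2 : q * (4 * q) ≤ q * ε := by gcongr
      linarith
    have i7 : C * q = L * q / 2 + q / 2 + q * ε := by rw [hC]; ring
    have i8 : R * X = R * (-Real.log (1 - q)) - R * (q * t / (1 - q)) := by rw [hX]; ring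
    linarith
  have hrX : r * (Real.log (1 - 2 * q + q * (δ ^ k + (1 - δ) ^ k)) - 2 * Real.log (1 - q))
      ≤ r * X := by gcongr
  rcases le_or_gt X 0 with h | h
  · have := mul_nonpos_of_nonneg_of_nonpos hr.le h
    linarith
  · have : r * X ≤ R * X := by gcongr
    linarith

lemma aux_mid (k : ℕ) (q r δ : ℝ) (hq0 : 0 < q) (hq1 : q ≤ 1 / 10)
    (hqk : q = 2 * (1 / 2) ^ k)
    (E5 : (k : ℝ) ^ 2 * (199 / 200) ^ k < 1 / 6)
    (hr : 0 < r) (hrR : r * q ≤ Real.log 2)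
    (h0 : 1 / 200 ≤ δ) (h1 : δ < 1 / 2) :
    r * (Real.log (1 - 2 * q + q * (δ ^ k + (1 - δ) ^ k)) - 2 * Real.log (1 - q))
      + Real.binEntropy δ < Real.log 2 := by
  have L2 := Real.log_two_lt_d9
  obtain ⟨u, hu⟩ : ∃ u, u = 1 - 2 * δ := ⟨_, rfl⟩
  have hD := aux_D u (by linarith) (by linarith)
  have hP := (aux_P u (by linarith) (by linarith) k).2
  have hδ : (1 - u) / 2 = δ := by rw [hu]; ring
  rw [hδ] at hD
  set s := δ ^ k + (1 - δ) ^ k with hs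
  have hse : s = (1 / 2) ^ k * ((1 + u) ^ k + (1 - u) ^ k) := by
    rw [hs, mul_add, ← mul_pow, ← mul_pow, hu, add_comm]; congr 2 <;> ring
  have hh : (0:ℝ) < (1 / 2) ^ k := by positivity
  have hsq : s - q ≤ u ^ 2 * ((k : ℝ) ^ 2 * (199 / 200) ^ k) := by
    have e1 : s - q = (1 / 2) ^ k * ((1 + u) ^ k + (1 - u) ^ k - 2) := by rw [hse, hqk]; ring
    have e2 := mul_le_mul_of_nonneg_left hP hh.le
    have e3 : (1 / 2 : ℝ) ^ k * (1 + u) ^ k ≤ (199 / 200) ^ k := by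
      rw [← mul_pow]; apply pow_le_pow_left₀ <;> linarith
    have e4 := mul_le_mul_of_nonneg_left e3 (show 0 ≤ u ^ 2 * (k : ℝ) ^ 2 by positivity)
    rw [e1]; nlinarith
  have hu0 : 0 < u := by linarith
  have hu2 : 0 < u ^ 2 := by positivity
  have hsq2 : s - q < u ^ 2 / 6 := by nlinarith
  have h1q : 0 < 1 - q := by linarith
  have hs0 : 0 ≤ s := by
    have : 0 ≤ δ ^ k := pow_nonneg (by linarith) k
    have : 0 ≤ (1 - δ) ^ k := pow_nonneg (by linarith) k
    linarith
  have hlog : Real.log (1 - 2 * q + q * s) - 2 * Real.log (1 - q) ≤ q * (s - q) / (1 - q) ^ 2 := by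
    have hp : 0 < 1 - 2 * q + q * s := by nlinarith
    have e : Real.log (1 - 2 * q + q * s) - 2 * Real.log (1 - q)
        = Real.log ((1 - 2 * q + q * s) / (1 - q) ^ 2) := by
      rw [Real.log_div hp.ne' (by positivity), Real.log_pow]; norm_num
    rw [e]
    refine (Real.log_le_sub_one_of_pos (by positivity)).trans (le_of_eq ?_)
    field_simp; ring
  have h2 := mul_le_mul_of_nonneg_left hlog hr.le
  have h3 : r * (q * (s - q) / (1 - q) ^ 2) < u ^ 2 / 6 := by
    rw [← mul_div_assoc, div_lt_iff₀ (by positivity), ← mul_assoc]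
    have : 81 / 100 ≤ (1 - q) ^ 2 := by nlinarith
    have hrq : 0 < r * q := by positivity
    calc r * q * (s - q) < r * q * (u ^ 2 / 6) := by gcongr
      _ ≤ (81 / 100) * (u ^ 2 / 6) := by gcongr; linarith
      _ ≤ _ := by nlinarith
  linarith

lemma aux_deriv (k : ℕ) (q r : ℝ) (hq0 : 0 < q) (hq1 : q ≤ 1 / 10) (hk : 2 ≤ k)
    (hqd : q = (2 : ℝ) ^ ((1 : ℤ) - k))
    (hqk : q = 2 * (1 / 2) ^ k)
    (E7 : (k : ℝ) ^ 2 * q < 1 / 10)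
    (hr : 0 < r) (hrR : r * q ≤ Real.log 2) :
    deriv (deriv (gr k r)) (1 / 2) < 0 := by
  have L2 := Real.log_two_lt_d9
  have hfpos : ∀ α ∈ Set.Ioo (0:ℝ) 1, 0 < fN k α := by
    intro α hα
    rw [aux_fN k q hqd]
    have : 0 ≤ α ^ k := pow_nonneg hα.1.le k
    have : 0 ≤ (1 - α) ^ k := pow_nonneg (by linarith [hα.2]) k
    nlinarith
  set f1 : ℝ → ℝ := fun α => q * (k * α ^ (k - 1) - k * (1 - α) ^ (k - 1)) with hf1
  have hf : ∀ α, HasDerivAt (fN k) (f1 α) α := by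
    intro α
    have e : fN k = fun α => 1 - 2 * q + q * (α ^ k + (1 - α) ^ k) := by
      funext a; exact aux_fN k q hqd a
    rw [e]
    have a1 := (hasDerivAt_id α).pow k
    have a2 := ((hasDerivAt_id α).const_sub 1).pow k
    have := ((a1.add a2).const_mul q).const_add (1 - 2 * q)
    refine HasDerivAt.congr_deriv this ?_
    simp only [hf1, id]; ring
  have hf2 : HasDerivAt f1 (q * (2 * k * (k - 1 : ℕ) * (1 / 2) ^ (k - 2))) (1 / 2) := by
    have a1 := ((hasDerivAt_id (1 / 2 : ℝ)).pow (k - 1)).const_mul (k : ℝ)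
    have a2 := (((hasDerivAt_id (1 / 2 : ℝ)).const_sub 1).pow (k - 1)).const_mul (k : ℝ)
    have := (a1.sub a2).const_mul q
    refine HasDerivAt.congr_deriv this ?_
    simp only [id, show k - 1 - 1 = k - 2 by omega]
    rw [show (1 - 1 / 2 : ℝ) = 1 / 2 by norm_num]
    ring
  set φ : ℝ → ℝ := fun α => r * Real.log (fN k α) + Real.binEntropy α with hφ
  set φ1 : ℝ → ℝ := fun α => r * (f1 α / fN k α) + (Real.log (1 - α) - Real.log α) with hφ1
  have hφd : ∀ α ∈ Set.Ioo (0:ℝ) 1, HasDerivAt φ (φ1 α) α := by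
    intro α hα
    have a1 := ((hf α).log (hfpos α hα).ne').const_mul r
    have a2 := Real.hasDerivAt_binEntropy hα.1.ne' hα.2.ne
    exact a1.add a2
  have hg : ∀ α ∈ Set.Ioo (0:ℝ) 1, HasDerivAt (gr k r) (Real.exp (φ α) * φ1 α) α := by
    intro α hα
    refine ((hφd α hα).exp).congr_of_eventuallyEq ?_
    filter_upwards [Ioo_mem_nhds hα.1 hα.2] with a ha
    exact aux_gr k r a ha.1.le ha.2.le (hfpos a ha)
  have hm : (1 / 2 : ℝ) ∈ Set.Ioo (0:ℝ) 1 := by constructor <;> norm_num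
  have hd : deriv (gr k r) =ᶠ[nhds (1 / 2)] fun α => Real.exp (φ α) * φ1 α := by
    filter_upwards [Ioo_mem_nhds hm.1 hm.2] with a ha
    exact (hg a ha).deriv
  rw [hd.deriv_eq]
  have hf1h : f1 (1 / 2) = 0 := by simp only [hf1]; norm_num
  have hφ1h : φ1 (1 / 2) = 0 := by simp only [hφ1, hf1h]; norm_num
  have hfh : fN k (1 / 2) = (1 - q) ^ 2 := by
    rw [aux_fN k q hqd, show (1 - 1 / 2 : ℝ) = 1 / 2 by norm_num]
    have : (1 / 2 : ℝ) ^ k = q / 2 := by linarith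
    rw [this]; ring
  have hφ2 := (((hf2.div (hf (1 / 2)) (hfpos _ hm).ne').const_mul r)).add
    ((((hasDerivAt_id (1 / 2 : ℝ)).const_sub 1).log (by norm_num)).sub
      ((hasDerivAt_id (1 / 2 : ℝ)).log (by norm_num)))
  have htot := ((hφd _ hm).exp).mul hφ2
  have hder : deriv (fun α => Real.exp (φ α) * φ1 α) (1 / 2) = _ := htot.deriv
  rw [hder]
  have hp2 : (1 / 2 : ℝ) ^ (k - 2) = 2 * q := by
    have : (1 / 2 : ℝ) ^ k = (1 / 2) ^ (k - 2) * (1 / 2) ^ 2 := by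
      rw [← pow_add]; congr 1; omega
    rw [this] at hqk; linarith
  rw [hφ1h, hf1h, hfh, hp2]
  have : 81 / 100 ≤ (1 - q) ^ 2 := by nlinarith
  have hk1 : ((k - 1 : ℕ) : ℝ) ≤ k := by exact_mod_cast Nat.sub_le k 1
  have hneg : r * (q * (2 * k * (k - 1 : ℕ) * (2 * q)) / (1 - q) ^ 2) < 4 := by
    rw [← mul_div_assoc, div_lt_iff₀ (by positivity)]
    calc r * (q * (2 * k * (k - 1 : ℕ) * (2 * q))) = (r * q) * (4 * (k * (k - 1 : ℕ) * q)) := by ring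
      _ ≤ 1 * (4 * (k * k * q)) := by gcongr; linarith
      _ < _ := by nlinarith
  have hE := Real.exp_pos (φ (1 / 2))
  have hne : (1 - q) ^ 2 ≠ 0 := by positivity
  have hsimp : ∀ A : ℝ, (A * (1 - q) ^ 2 - 0) / ((1 - q) ^ 2) ^ 2 = A / (1 - q) ^ 2 := by
    intro A; rw [sub_zero, sq ((1 - q) ^ 2), mul_div_mul_right _ _ hne]
  simp only [zero_mul, mul_zero, zero_add, id, hsimp] at *
  apply mul_neg_of_pos_of_neg hE
  norm_num at *
  linarith

/-- For every `ε > 0` there is `k₀` such that for all `k ≥ k₀` and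
`0 < r < 2^(k-1) ln 2 - (ln 2)/2 - 1/2 - ε`, the function `g_r` is strictly maximized
at `1/2` on `[0,1]` and `g_r''(1/2) < 0`. -/
theorem gr_max_at_half (ε : ℝ) (hε : 0 < ε) :
    ∃ k₀ : ℕ, ∀ k : ℕ, k₀ ≤ k → ∀ r : ℝ, 0 < r →
      r < (2 : ℝ) ^ ((k : ℤ) - 1) * Real.log 2 - Real.log 2 / 2 - 1 / 2 - ε →
      (∀ α ∈ Set.Icc (0 : ℝ) 1, α ≠ 1 / 2 → gr k r α < gr k r (1 / 2)) ∧
        deriv (deriv (gr k r)) (1 / 2) < 0 := by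
  have L1 := Real.log_two_gt_d9
  have L2 := Real.log_two_lt_d9
  set C := Real.log 2 / 2 + 1 / 2 + ε with hC
  have hC0 : 0 < C := by positivity
  have hT : Filter.Tendsto (fun k : ℕ => 2 * (1 / 2 : ℝ) ^ k) Filter.atTop (nhds 0) := by
    simpa using (tendsto_pow_atTop_nhds_zero_of_lt_one (r := (1/2:ℝ)) (by norm_num) (by norm_num)).const_mul 2
  have hq : ∀ c : ℝ, 0 < c → ∀ᶠ k : ℕ in Filter.atTop, 2 * (1 / 2 : ℝ) ^ k ≤ c := by
    intro c hc
    filter_upwards [hT.eventually (gt_mem_nhds hc)] with k hk using hk.le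
  have F5 : ∀ᶠ k : ℕ in Filter.atTop, (k : ℝ) ^ 2 * (199 / 200) ^ k < 1 / 6 :=
    (tendsto_pow_const_mul_const_pow_of_abs_lt_one 2 (r := (199/200:ℝ)) (by norm_num [abs_of_pos])).eventually
      (gt_mem_nhds (by norm_num))
  have F7 : ∀ᶠ k : ℕ in Filter.atTop, (k : ℝ) ^ 2 * (1 / 2) ^ k < 1 / 20 :=
    (tendsto_pow_const_mul_const_pow_of_abs_lt_one 2 (r := (1/2:ℝ)) (by norm_num [abs_of_pos])).eventually
      (gt_mem_nhds (by norm_num))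
  have F8 : ∀ᶠ k : ℕ in Filter.atTop, Real.log (k : ℝ) ≤ 1 / 10 * k := by
    have h := (Real.isLittleO_log_id_atTop.comp_tendsto tendsto_natCast_atTop_atTop).bound
      (show (0:ℝ) < 1 / 10 by norm_num)
    filter_upwards [h] with k hk
    simp only [Function.comp, id, Real.norm_eq_abs, Nat.abs_cast] at hk
    exact (le_abs_self _).trans hk
  have F9 : ∀ᶠ k : ℕ in Filter.atTop, 20 * (2 - Real.log (ε / 8) / 2) ≤ (k : ℝ) :=
    tendsto_natCast_atTop_atTop.eventually_ge_atTop _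
  have hall := (hq (1 / 10) (by norm_num)).and ((hq (1 / 20 / C) (by positivity)).and
    ((hq (ε / 4) (by positivity)).and ((hq ((ε / 8) / C ^ 2) (by positivity)).and
    (F5.and (F7.and (F8.and (F9.and (Filter.eventually_ge_atTop 2))))))))
  obtain ⟨k₀, hk₀⟩ := Filter.eventually_atTop.1 hall
  refine ⟨k₀, fun k hk r hr hrR => ?_⟩
  obtain ⟨G1, G2, G3, G4, G5, G7, G8, G9, hk2⟩ := hk₀ k hk
  obtain ⟨q, hqk⟩ : ∃ q : ℝ, q = 2 * (1 / 2) ^ k := ⟨_, rfl⟩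
  rw [← hqk] at G1 G2 G3 G4
  have hq0 : 0 < q := by rw [hqk]; positivity
  have hqd : q = (2 : ℝ) ^ ((1 : ℤ) - k) := by
    rw [hqk, zpow_sub₀ (by norm_num), zpow_natCast]
    simp [div_eq_mul_inv]
  have hqi : (2 : ℝ) ^ ((k : ℤ) - 1) = 1 / q := by
    rw [hqd, one_div, ← zpow_neg]; congr 1; ring
  have hrR' : r < Real.log 2 / q - C := by
    rw [hqi] at hrR
    have : 1 / q * Real.log 2 = Real.log 2 / q := by ring
    rw [hC]; linarith
  have hrq : r * q ≤ Real.log 2 := by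
    have : r < Real.log 2 / q := by linarith
    rw [lt_div_iff₀ hq0] at this
    exact this.le
  have hlogq : Real.log q = Real.log 2 - k * Real.log 2 := by
    rw [hqk, Real.log_mul (by norm_num) (by positivity), Real.log_pow, one_div, Real.log_inv]; ring
  have hqe : Real.exp (-((k : ℝ) * Real.log 2)) = q / 2 := by
    have : -((k : ℝ) * Real.log 2) = Real.log (q / 2) := by
      rw [Real.log_div hq0.ne' (by norm_num), hlogq]; ring
    rw [this, Real.exp_log (by positivity)]
  have E1 : q * C ≤ 1 / 20 := by rwa [le_div_iff₀ hC0] at G2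
  have E3 : C ^ 2 * (ε / 8 * q) ≤ (ε / 8) ^ 2 := by
    rw [le_div_iff₀ (by positivity)] at G4
    nlinarith
  have E4 : Real.log k - Real.log (ε / 8 * q) / 2 + 1 < 21 / 40 * k := by
    rw [Real.log_mul (by positivity) (by positivity), hlogq]
    have : (k:ℝ) * Real.log 2 ≤ k * 0.7 := by gcongr; linarith
    have : (0:ℝ) ≤ k := by positivity
    linarith
  refine ⟨?_, aux_deriv k q r hq0 G1 hk2 hqd hqk (by rw [hqk]; linarith) hr hrq⟩
  have hmain : ∀ δ : ℝ, 0 ≤ δ → δ < 1 / 2 →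
      r * (Real.log (fN k δ) - 2 * Real.log (1 - q)) + Real.binEntropy δ < Real.log 2 := by
    intro δ h0 h1
    rw [aux_fN k q hqd]
    rcases le_total δ (1 / 200) with h | h
    · exact aux_nearOne k q r ε δ hε hq0 G1 hqe hk2 E1 (by linarith) E3 E4 hr hrR' h0 h
    · exact aux_mid k q r δ hq0 G1 hqk G5 hr hrq h h1
  have hfpos : ∀ α ∈ Set.Icc (0:ℝ) 1, 0 < fN k α := by
    intro α hα
    rw [aux_fN k q hqd]
    have : 0 ≤ α ^ k := pow_nonneg hα.1 k
    have : 0 ≤ (1 - α) ^ k := pow_nonneg (by linarith [hα.2]) k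
    nlinarith
  have hfh : fN k (1 / 2) = (1 - q) ^ 2 := by
    rw [aux_fN k q hqd, show (1 - 1 / 2 : ℝ) = 1 / 2 by norm_num]
    have : (1 / 2 : ℝ) ^ k = q / 2 := by linarith
    rw [this]; ring
  intro α hα hne
  have hm : (1 / 2 : ℝ) ∈ Set.Icc (0:ℝ) 1 := by constructor <;> norm_num
  rw [aux_gr k r α hα.1 hα.2 (hfpos α hα), aux_gr k r _ hm.1 hm.2 (hfpos _ hm), hfh,
    Real.log_pow, Real.exp_lt_exp, one_div, Real.binEntropy_two_inv]
  push_cast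
  rcases lt_or_gt_of_ne hne with h | h
  · have := hmain α hα.1 h
    linarith
  · have := hmain (1 - α) (by linarith [hα.2]) (by linarith)
    rw [Real.binEntropy_one_sub] at this
    have e : fN k (1 - α) = fN k α := by
      rw [aux_fN k q hqd, aux_fN k q hqd, sub_sub_cancel, add_comm (α ^ k)]
    rw [e] at this
    linarith
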